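/- Let the loss L: ℝ → ℝ be proper, continuous and convex, and satisfy L(u) ≤ C(1 + |u|) for some C > 0 (hence L is Lipschitz with Lipschitz constant Lip(L) ≤ C). Then, for p = 1, the optimal value of the distributionally robust problem min_{θ∈Θ} sup_{Q∈B_ε(P_n)} E_Q[L(Y − θᵀX)] equals the optimal value of the regularized M-estimation problem min_{θ∈Θ} (1/n)Σ_{i=1}^n L(y_i − θᵀx_i) + ε·Lip(L)·‖θ‖. -/

import Mathlib

/-! For each fixed `θ` the worst-case expected loss equals the regularized empirical loss, so the
two infima agree term by term.

Upper bound (`integral_le_of_mem`): where the transport cost is finite the labels agree, so the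
loss `z ↦ L (z.2 - ⟪θ, z.1⟫)` is `K * ‖θ‖`-Lipschitz with respect to the cost; integrate this
against a nearly optimal coupling.

Lower bound (`exists_near_optimal`): by convexity a difference quotient of `L` persists along the
whole ray starting from its interval (`convex_ray_lower`), so every slope `k < K` is attained
asymptotically in one of the two directions (`exists_asymptotic_slope`). Moving a fraction `α` of
the mass of `P_n` by the distance `ε / α` along `± θ` costs `ε` and raises the expected loss by at
least `ε * k * ‖θ‖ - O(α)`; then `α → 0` and `k → K`.

The bound `K ≤ C` also follows from `convex_ray_lower`: a slope above `C` would violate the growth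
condition far out on the ray. -/

open MeasureTheory ProbabilityTheory Filter ENNReal
open scoped RealInnerProductSpace Topology NNReal

noncomputable section

def couplings {α : Type*} [MeasurableSpace α] (μ ν : Measure α) :
    Set (Measure (α × α)) :=
  {γ | γ.map Prod.fst = μ ∧ γ.map Prod.snd = ν}

noncomputable def transportDiscrepancy {α : Type*} [MeasurableSpace α]
    (c : α → α → ℝ≥0∞) (μ ν : Measure α) : ℝ≥0∞ :=
  ⨅ γ ∈ couplings μ ν, ∫⁻ z, c z.1 z.2 ∂γ

noncomputable def droCost (p d : ℕ) (a b : EuclideanSpace ℝ (Fin d) × ℝ) : ℝ≥0∞ :=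
  ENNReal.ofReal (‖a.1 - b.1‖ ^ p) + ⊤ * ENNReal.ofReal |a.2 - b.2|

noncomputable def empiricalMeasure {d n : ℕ} (x : Fin n → EuclideanSpace ℝ (Fin d))
    (y : Fin n → ℝ) : Measure (EuclideanSpace ℝ (Fin d) × ℝ) :=
  (n : ℝ≥0∞)⁻¹ • ∑ i, Measure.dirac (x i, y i)

def ambiguitySet (p : ℕ) {d n : ℕ} (x : Fin n → EuclideanSpace ℝ (Fin d))
    (y : Fin n → ℝ) (ε : ℝ) : Set (Measure (EuclideanSpace ℝ (Fin d) × ℝ)) :=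
  {Q | IsProbabilityMeasure Q ∧
    transportDiscrepancy (droCost p d) Q (empiricalMeasure x y) ≤ ENNReal.ofReal ε}

/-- Worst-case expected loss `sup_{Q ∈ B_ε(P_n)} E_Q[L(Y − θᵀX)]`, valued in `EReal`. -/
noncomputable def droObjE (p : ℕ) {d n : ℕ} (x : Fin n → EuclideanSpace ℝ (Fin d))
    (y : Fin n → ℝ) (ε : ℝ) (L : ℝ → ℝ) (θ : EuclideanSpace ℝ (Fin d)) : EReal :=
  ⨆ (Q : ambiguitySet p x y ε),
    ((∫ z, L (z.2 - ⟪θ, z.1⟫) ∂(Q : Measure (EuclideanSpace ℝ (Fin d) × ℝ)) : ℝ) : EReal)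

/-- A convex function lies above each of its chords' extensions beyond the endpoint `u`. -/
lemma convex_ray_lower {L : ℝ → ℝ} (hL : ConvexOn ℝ Set.univ L) (u v t : ℝ) (ht : 1 ≤ t) :
    L v + t * (L u - L v) ≤ L (v + t * (u - v)) := by
  have ht0 : 0 < t := by linarith
  have ha : 0 ≤ 1 / t := by positivity
  have hb : 0 ≤ 1 - 1 / t := by rw [sub_nonneg, div_le_one ht0]; exact ht
  have h := hL.2 (Set.mem_univ (v + t * (u - v))) (Set.mem_univ v) ha hb (by ring)
  have e : (1 / t) • (v + t * (u - v)) + (1 - 1 / t) • v = u := by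
    simp only [smul_eq_mul]; field_simp; ring
  rw [e] at h
  simp only [smul_eq_mul] at h
  have h2 := mul_le_mul_of_nonneg_left h ht0.le
  have e2 : t * (1 / t * L (v + t * (u - v)) + (1 - 1 / t) * L v)
      = L (v + t * (u - v)) + (t - 1) * L v := by field_simp
  rw [e2] at h2
  linarith

lemma lipschitz_of_growth {L : ℝ → ℝ} (hL : ConvexOn ℝ Set.univ L) {C : ℝ} (hC : 0 < C)
    (hg : ∀ u, L u ≤ C * (1 + |u|)) : LipschitzWith C.toNNReal L := by
  refine LipschitzWith.of_le_add_mul _ fun u v => ?_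
  rw [Real.coe_toNNReal _ hC.le, Real.dist_eq]
  by_contra! hcon
  have hδ : 0 < L u - L v - C * |u - v| := by linarith
  obtain ⟨m, hm⟩ := exists_nat_gt ((C * (1 + |v|) - L v) / (L u - L v - C * |u - v|))
  rw [div_lt_iff₀ hδ] at hm
  set t : ℝ := max 1 m
  have ht1 : (1 : ℝ) ≤ t := le_max_left _ _
  have htm : (m : ℝ) ≤ t := le_max_right _ _
  have h1 := convex_ray_lower hL u v t ht1
  have h2 := hg (v + t * (u - v))
  have h3 : |v + t * (u - v)| ≤ |v| + t * |u - v| := by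
    refine (abs_add_le _ _).trans ?_
    rw [abs_mul, abs_of_nonneg (by linarith : 0 ≤ t)]
  have h4 := mul_le_mul_of_nonneg_left h3 hC.le
  have h5 := mul_le_mul_of_nonneg_right htm hδ.le
  nlinarith

/-- Every slope `k < Lip(L)` is eventually exceeded along one of the two rays (`s = 1` or
`s = -1`), with an error at the base point `u` that does not depend on the step `τ`. -/
lemma exists_asymptotic_slope {L : ℝ → ℝ} (hL : ConvexOn ℝ Set.univ L) {K : ℝ≥0}
    (hK : LipschitzWith K L) (hKmin : ∀ K' : ℝ≥0, LipschitzWith K' L → K ≤ K')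
    {k : ℝ≥0} (hk : k < K) :
    ∃ s v T : ℝ, |s| = 1 ∧ 0 < T ∧ ∀ u τ : ℝ, T ≤ τ →
      L u + k * τ - 2 * K * |u - v| ≤ L (u + s * τ) := by
  have hnot : ¬ LipschitzWith k L := fun h => not_lt.mpr (hKmin k h) hk
  have : ∃ u v : ℝ, L v + k * dist u v < L u := by
    by_contra! hcon
    exact hnot (LipschitzWith.of_le_add_mul k hcon)
  obtain ⟨a, v, hav⟩ := this
  rw [Real.dist_eq] at hav
  have hne : a - v ≠ 0 := by
    intro h
    have : a = v := by linarith
    subst this; simp at hav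
  have hpos : 0 < |a - v| := abs_pos.mpr hne
  refine ⟨(a - v) / |a - v|, v, |a - v|, ?_, hpos, fun u τ hτ => ?_⟩
  · rw [abs_div, abs_abs, div_self hpos.ne']
  have h1 := convex_ray_lower hL a v (τ / |a - v|) (by rwa [le_div_iff₀ hpos, one_mul])
  have e : v + τ / |a - v| * (a - v) = v + (a - v) / |a - v| * τ := by ring
  rw [e] at h1
  have h2 : k * τ ≤ τ / |a - v| * (L a - L v) := by
    have hτ0 : 0 ≤ τ / |a - v| := div_nonneg (hpos.le.trans hτ) hpos.le
    have := mul_le_mul_of_nonneg_left (by linarith : k * |a - v| ≤ L a - L v) hτ0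
    calc (k : ℝ) * τ = τ / |a - v| * (k * |a - v|) := by field_simp
      _ ≤ _ := this
  have h3 := hK.le_add_mul u v
  have h4 := hK.le_add_mul (v + (a - v) / |a - v| * τ) (u + (a - v) / |a - v| * τ)
  rw [dist_add_right, dist_comm, Real.dist_eq] at h4
  rw [Real.dist_eq] at h3
  linarith

lemma empirical_prob {d n : ℕ} (hn : 0 < n) (x : Fin n → EuclideanSpace ℝ (Fin d))
    (y : Fin n → ℝ) : IsProbabilityMeasure (empiricalMeasure x y) := by
  constructor
  have : (n : ℝ≥0∞) ≠ 0 := by exact_mod_cast hn.ne'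
  simp [empiricalMeasure, ENNReal.inv_mul_cancel this]

lemma empirical_integrable {d n : ℕ} (hn : 0 < n) (x : Fin n → EuclideanSpace ℝ (Fin d))
    (y : Fin n → ℝ) (f : EuclideanSpace ℝ (Fin d) × ℝ → ℝ) :
    Integrable f (empiricalMeasure x y) := by
  refine Integrable.smul_measure ?_ (by simp; omega)
  rw [integrable_finsetSum_measure]
  intro i _
  exact integrable_dirac (by simp)

lemma empirical_integral {d n : ℕ} (x : Fin n → EuclideanSpace ℝ (Fin d))
    (y : Fin n → ℝ) (f : EuclideanSpace ℝ (Fin d) × ℝ → ℝ) :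
    ∫ z, f z ∂(empiricalMeasure x y) = (1 / (n : ℝ)) * ∑ i, f (x i, y i) := by
  rw [empiricalMeasure, integral_smul_measure, integral_finsetSum_measure]
  · simp [integral_dirac]
  · intro i _
    exact integrable_dirac (by simp)

lemma measurable_droCost (d : ℕ) :
    Measurable fun z : (EuclideanSpace ℝ (Fin d) × ℝ) × (EuclideanSpace ℝ (Fin d) × ℝ) =>
      droCost 1 d z.1 z.2 := by
  unfold droCost
  fun_prop

/-- Where the transport cost is finite the labels agree, so there the loss is Lipschitz with
respect to the cost. -/
lemma abs_loss_sub_le {d : ℕ} {L : ℝ → ℝ} {K : ℝ≥0} (hK : LipschitzWith K L)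
    (θ : EuclideanSpace ℝ (Fin d)) (a b : EuclideanSpace ℝ (Fin d) × ℝ)
    (h : droCost 1 d a b < ⊤) :
    |L (a.2 - ⟪θ, a.1⟫) - L (b.2 - ⟪θ, b.1⟫)| ≤ K * ‖θ‖ * (droCost 1 d a b).toReal := by
  have hab : a.2 = b.2 := by
    by_contra hne
    have : ENNReal.ofReal |a.2 - b.2| ≠ 0 := by
      simpa [sub_eq_zero] using hne
    simp [droCost, ENNReal.top_mul this] at h
  have hc : (droCost 1 d a b).toReal = ‖a.1 - b.1‖ := by
    simp [droCost, hab]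
  have h1 := hK.dist_le_mul (a.2 - ⟪θ, a.1⟫) (b.2 - ⟪θ, b.1⟫)
  rw [Real.dist_eq, Real.dist_eq] at h1
  have h2 : |a.2 - ⟪θ, a.1⟫ - (b.2 - ⟪θ, b.1⟫)| ≤ ‖θ‖ * ‖a.1 - b.1‖ := by
    have : a.2 - ⟪θ, a.1⟫ - (b.2 - ⟪θ, b.1⟫) = -⟪θ, a.1 - b.1⟫ := by
      rw [inner_sub_right, hab]; ring
    rw [this, abs_neg]
    exact abs_real_inner_le_norm _ _
  rw [hc, mul_assoc]
  exact h1.trans (mul_le_mul_of_nonneg_left h2 K.2)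

lemma continuous_loss {d : ℕ} {L : ℝ → ℝ} (hL : Continuous L)
    (θ : EuclideanSpace ℝ (Fin d)) :
    Continuous fun z : EuclideanSpace ℝ (Fin d) × ℝ => L (z.2 - ⟪θ, z.1⟫) := by
  fun_prop

/-- Kantorovich-type upper bound. The loss is `Q`-integrable because it differs from a
`P_n`-integrable function by at most a multiple of the cost of a near-optimal coupling. -/
lemma integral_le_of_mem {d n : ℕ} (hn : 0 < n) (x : Fin n → EuclideanSpace ℝ (Fin d))
    (y : Fin n → ℝ) {ε : ℝ} (hε : 0 ≤ ε) {L : ℝ → ℝ} {K : ℝ≥0} (hK : LipschitzWith K L)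
    (θ : EuclideanSpace ℝ (Fin d)) {Q : Measure (EuclideanSpace ℝ (Fin d) × ℝ)}
    (hQ : Q ∈ ambiguitySet 1 x y ε) :
    ∫ z, L (z.2 - ⟪θ, z.1⟫) ∂Q ≤
      ∫ z, L (z.2 - ⟪θ, z.1⟫) ∂(empiricalMeasure x y) + ε * K * ‖θ‖ := by
  obtain ⟨hQp, hQc⟩ := hQ
  set f : EuclideanSpace ℝ (Fin d) × ℝ → ℝ := fun z => L (z.2 - ⟪θ, z.1⟫) with hf
  have hfc : Continuous f := continuous_loss hK.continuous θ
  have key : ∀ δ : ℝ, ε < δ →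
      ∫ z, f z ∂Q ≤ ∫ z, f z ∂(empiricalMeasure x y) + δ * (K * ‖θ‖) := by
    intro δ hδ
    have hlt : transportDiscrepancy (droCost 1 d) Q (empiricalMeasure x y) < ENNReal.ofReal δ :=
      hQc.trans_lt ((ENNReal.ofReal_lt_ofReal_iff (by linarith)).mpr hδ)
    unfold transportDiscrepancy at hlt
    simp only [iInf_lt_iff] at hlt
    obtain ⟨γ, ⟨h1, h2⟩, hγ⟩ := hlt
    have hcm := measurable_droCost d
    have hfin : ∫⁻ z, droCost 1 d z.1 z.2 ∂γ ≠ ⊤ := (hγ.trans_le le_top).ne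
    have hci : Integrable (fun z => (droCost 1 d z.1 z.2).toReal) γ :=
      integrable_toReal_of_lintegral_ne_top hcm.aemeasurable hfin
    have hae : ∀ᵐ z ∂γ, droCost 1 d z.1 z.2 < ⊤ := ae_lt_top hcm hfin
    have hbd : ∀ᵐ z ∂γ, |f z.1 - f z.2| ≤ K * ‖θ‖ * (droCost 1 d z.1 z.2).toReal := by
      filter_upwards [hae] with z hz using abs_loss_sub_le hK θ z.1 z.2 hz
    have hi2 : Integrable (fun z => f z.2) γ := by
      have := empirical_integrable hn x y f
      rw [← h2] at this
      exact this.comp_measurable measurable_snd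
    have hid : Integrable (fun z => f z.1 - f z.2) γ := by
      refine (hci.const_mul (K * ‖θ‖)).mono' ?_ hbd
      exact (by fun_prop : Continuous fun z : (EuclideanSpace ℝ (Fin d) × ℝ) ×
        (EuclideanSpace ℝ (Fin d) × ℝ) => f z.1 - f z.2).aestronglyMeasurable
    have hi1 : Integrable (fun z => f z.1) γ := by
      refine (hid.add hi2).congr (Eventually.of_forall fun z => ?_)
      simp
    have e1 : ∫ z, f z ∂Q = ∫ z, f z.1 ∂γ := by
      rw [← h1, integral_map measurable_fst.aemeasurable hfc.aestronglyMeasurable]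
    have e2 : ∫ z, f z ∂(empiricalMeasure x y) = ∫ z, f z.2 ∂γ := by
      rw [← h2, integral_map measurable_snd.aemeasurable hfc.aestronglyMeasurable]
    have e3 : ∫ z, (droCost 1 d z.1 z.2).toReal ∂γ ≤ δ := by
      rw [integral_toReal hcm.aemeasurable hae]
      exact ENNReal.toReal_le_of_le_ofReal (by linarith) hγ.le
    have e4 : ∫ z, (f z.1 - f z.2) ∂γ ≤ ∫ z, K * ‖θ‖ * (droCost 1 d z.1 z.2).toReal ∂γ := by
      refine integral_mono_ae hid (hci.const_mul _) ?_
      filter_upwards [hbd] with z hz using (le_abs_self _).trans hz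
    rw [integral_sub hi1 hi2, integral_const_mul] at e4
    have e5 := mul_le_mul_of_nonneg_left e3 (by positivity : 0 ≤ (K : ℝ) * ‖θ‖)
    rw [e1, e2]
    linarith
  have hcont : Tendsto (fun δ : ℝ => ∫ z, f z ∂(empiricalMeasure x y) + δ * (K * ‖θ‖))
      (𝓝[>] ε) (𝓝 (∫ z, f z ∂(empiricalMeasure x y) + ε * (K * ‖θ‖))) :=
    ((by fun_prop : Continuous fun δ : ℝ =>
      ∫ z, f z ∂(empiricalMeasure x y) + δ * (K * ‖θ‖)).tendsto ε).mono_left nhdsWithin_le_nhds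
  rw [mul_assoc]
  exact ge_of_tendsto hcont (eventually_mem_nhdsWithin.mono fun δ hδ => key δ hδ)

/-- The perturbation of the empirical measure that moves a fraction `α` of the mass of every
data point by the vector `w`, at total cost `α * ‖w‖`. -/
def shiftedMeasure {d n : ℕ} (x : Fin n → EuclideanSpace ℝ (Fin d)) (y : Fin n → ℝ)
    (α : ℝ) (w : EuclideanSpace ℝ (Fin d)) : Measure (EuclideanSpace ℝ (Fin d) × ℝ) :=
  ENNReal.ofReal (1 - α) • empiricalMeasure x y +
    ENNReal.ofReal α • (empiricalMeasure x y).map fun z => (z.1 + w, z.2)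

lemma shiftedMeasure_mem {d n : ℕ} (hn : 0 < n) (x : Fin n → EuclideanSpace ℝ (Fin d))
    (y : Fin n → ℝ) {α ε : ℝ} (h0 : 0 ≤ α) (h1 : α ≤ 1) (w : EuclideanSpace ℝ (Fin d))
    (hw : α * ‖w‖ ≤ ε) : shiftedMeasure x y α w ∈ ambiguitySet 1 x y ε := by
  have hP := empirical_prob hn x y
  set P := empiricalMeasure x y with hPdef
  have hT : Measurable fun z : EuclideanSpace ℝ (Fin d) × ℝ => (z.1 + w, z.2) := by fun_prop
  have hsum : ENNReal.ofReal (1 - α) + ENNReal.ofReal α = 1 := by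
    rw [← ENNReal.ofReal_add (by linarith) h0]; simp
  have hcm := measurable_droCost d
  refine ⟨⟨?_⟩, ?_⟩
  · simp [shiftedMeasure, ← hPdef, Measure.map_apply hT, hsum]
  -- the coupling that pairs each moved atom with its origin
  refine (iInf₂_le (ENNReal.ofReal (1 - α) • P.map (fun z => (z, z)) +
    ENNReal.ofReal α • P.map (fun z => ((z.1 + w, z.2), z))) ⟨?_, ?_⟩).trans ?_
  · rw [lintegral_add_measure, lintegral_smul_measure, lintegral_smul_measure,
      lintegral_map hcm (by fun_prop), lintegral_map hcm (by fun_prop)]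
    simp only [droCost, sub_self, add_sub_cancel_left]
    simp only [norm_zero, abs_zero, pow_one, ENNReal.ofReal_zero, mul_zero, add_zero,
      lintegral_const, measure_univ, mul_one, smul_eq_mul, zero_add]
    rw [← ENNReal.ofReal_mul h0]
    exact ENNReal.ofReal_le_ofReal hw
  · rw [Measure.map_add _ _ measurable_fst, Measure.map_smul, Measure.map_smul,
      Measure.map_map measurable_fst (by fun_prop), Measure.map_map measurable_fst (by fun_prop)]
    simp [shiftedMeasure, Function.comp_def, ← hPdef]
  · rw [Measure.map_add _ _ measurable_snd, Measure.map_smul, Measure.map_smul,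
      Measure.map_map measurable_snd (by fun_prop), Measure.map_map measurable_snd (by fun_prop)]
    simp [Function.comp_def, ← add_smul, hsum, hPdef]

lemma shiftedMeasure_integral {d n : ℕ} (hn : 0 < n) (x : Fin n → EuclideanSpace ℝ (Fin d))
    (y : Fin n → ℝ) {α : ℝ} (h0 : 0 ≤ α) (h1 : α ≤ 1) (w : EuclideanSpace ℝ (Fin d))
    {f : EuclideanSpace ℝ (Fin d) × ℝ → ℝ} (hf : Continuous f) :
    ∫ z, f z ∂(shiftedMeasure x y α w) = (1 - α) * ∫ z, f z ∂(empiricalMeasure x y) +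
      α * ∫ z, f (z.1 + w, z.2) ∂(empiricalMeasure x y) := by
  have hT : Measurable fun z : EuclideanSpace ℝ (Fin d) × ℝ => (z.1 + w, z.2) := by fun_prop
  rw [shiftedMeasure, integral_add_measure, integral_smul_measure, integral_smul_measure,
    integral_map hT.aemeasurable hf.aestronglyMeasurable, ENNReal.toReal_ofReal (by linarith),
    ENNReal.toReal_ofReal h0]
  · simp
  · exact (empirical_integrable hn x y f).smul_measure ENNReal.ofReal_ne_top
  · refine Integrable.smul_measure ?_ ENNReal.ofReal_ne_top
    rw [integrable_map_measure hf.aestronglyMeasurable hT.aemeasurable]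
    exact empirical_integrable hn x y _

/-- Near-optimality: moving a vanishing fraction `α` of the mass by the distance `ε / α` along
`± θ` exploits the asymptotic slope `Lip(L)` of the loss. -/
lemma exists_near_optimal {d n : ℕ} (hn : 0 < n) (x : Fin n → EuclideanSpace ℝ (Fin d))
    (y : Fin n → ℝ) {ε : ℝ} (hε : 0 ≤ ε) {L : ℝ → ℝ} (hL : ConvexOn ℝ Set.univ L) {K : ℝ≥0}
    (hK : LipschitzWith K L) (hKmin : ∀ K' : ℝ≥0, LipschitzWith K' L → K ≤ K')
    (θ : EuclideanSpace ℝ (Fin d)) {a : ℝ}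
    (ha : a < ∫ z, L (z.2 - ⟪θ, z.1⟫) ∂(empiricalMeasure x y) + ε * K * ‖θ‖) :
    ∃ Q ∈ ambiguitySet 1 x y ε, a ≤ ∫ z, L (z.2 - ⟪θ, z.1⟫) ∂Q := by
  have hfc := continuous_loss hK.continuous θ
  by_cases hdeg : ε * K * ‖θ‖ = 0
  · refine ⟨shiftedMeasure x y 0 0,
      shiftedMeasure_mem hn x y le_rfl zero_le_one 0 (by simpa using hε), ?_⟩
    rw [shiftedMeasure_integral hn x y le_rfl zero_le_one 0 hfc]
    simp only [hdeg] at ha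
    linarith
  have hε0 : 0 < ε := lt_of_le_of_ne hε (by rintro rfl; simp at hdeg)
  have hK0 : 0 < K := pos_iff_ne_zero.mpr (by rintro rfl; simp at hdeg)
  have hθ0 : 0 < ‖θ‖ := lt_of_le_of_ne (norm_nonneg _) (by intro h; simp [← h] at hdeg)
  set I := ∫ z, L (z.2 - ⟪θ, z.1⟫) ∂(empiricalMeasure x y) with hI
  obtain ⟨k, hkK, hka⟩ : ∃ k : ℝ≥0, k < K ∧ a < I + ε * k * ‖θ‖ := by
    have hr : (a - I) / (ε * ‖θ‖) < K := by
      rw [div_lt_iff₀ (by positivity)]; linarith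
    obtain ⟨r, hr1, hr2⟩ := exists_between (max_lt hr (NNReal.coe_pos.mpr hK0))
    refine ⟨⟨r, ((le_max_right _ _).trans_lt hr1).le⟩, hr2, ?_⟩
    have := (le_max_left _ _).trans_lt hr1
    rw [div_lt_iff₀ (by positivity)] at this
    change a < I + ε * r * ‖θ‖
    linarith
  obtain ⟨s, v, T, hs, hT, hslope⟩ := exists_asymptotic_slope hL hK hKmin hkK
  set g : EuclideanSpace ℝ (Fin d) × ℝ → ℝ := fun z => 2 * K * |z.2 - ⟪θ, z.1⟫ - v| with hg
  set D := ∫ z, g z ∂(empiricalMeasure x y) with hD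
  have hD0 : 0 ≤ D := integral_nonneg fun z => by positivity
  set η := I + ε * k * ‖θ‖ - a with hη
  have hη0 : 0 < η := by linarith
  obtain ⟨α, hα0, hα1, hαT, hαη⟩ :
      ∃ α : ℝ, 0 < α ∧ α ≤ 1 ∧ α * T ≤ ε * ‖θ‖ ∧ α * (D + 1) ≤ η := by
    refine ⟨min 1 (min (ε * ‖θ‖ / T) (η / (D + 1))), by positivity, min_le_left _ _, ?_, ?_⟩
    · rw [← le_div_iff₀ hT]
      exact (min_le_right _ _).trans (min_le_left _ _)
    · rw [← le_div_iff₀ (by positivity)]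
      exact (min_le_right _ _).trans (min_le_right _ _)
  set w : EuclideanSpace ℝ (Fin d) := (-(s * (ε / α / ‖θ‖))) • θ with hw
  have hwn : α * ‖w‖ = ε := by
    rw [hw, norm_smul, norm_neg, norm_mul, Real.norm_eq_abs, hs, Real.norm_eq_abs,
      abs_of_nonneg (by positivity)]
    field_simp
  have hwi : ⟪θ, w⟫ = -(s * (ε * ‖θ‖ / α)) := by
    rw [hw, inner_smul_right, real_inner_self_eq_norm_sq]
    field_simp
  refine ⟨shiftedMeasure x y α w, shiftedMeasure_mem hn x y hα0.le hα1 w hwn.le, ?_⟩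
  rw [shiftedMeasure_integral hn x y hα0.le hα1 w hfc]
  have hmono : I + k * (ε * ‖θ‖ / α) - D ≤
      ∫ z, L (z.2 - ⟪θ, z.1 + w⟫) ∂(empiricalMeasure x y) := by
    have hP := empirical_prob hn x y
    have e : ∫ z, (L (z.2 - ⟪θ, z.1⟫) + k * (ε * ‖θ‖ / α) - g z) ∂(empiricalMeasure x y)
        = I + k * (ε * ‖θ‖ / α) - D := by
      rw [integral_sub (empirical_integrable hn x y _) (empirical_integrable hn x y _),
        integral_add (empirical_integrable hn x y _) (empirical_integrable hn x y _)]
      simp [hI, hD]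
    rw [← e]
    refine integral_mono (empirical_integrable hn x y _) (empirical_integrable hn x y _)
      fun z => ?_
    have := hslope (z.2 - ⟪θ, z.1⟫) (ε * ‖θ‖ / α) (by rw [le_div_iff₀ hα0]; linarith)
    have e2 : z.2 - ⟪θ, z.1 + w⟫ = z.2 - ⟪θ, z.1⟫ + s * (ε * ‖θ‖ / α) := by
      rw [inner_add_right, hwi]; ring
    simp only [e2, hg]
    exact this
  have h := mul_le_mul_of_nonneg_left hmono hα0.le
  have e3 : α * (I + k * (ε * ‖θ‖ / α) - D) = α * I + ε * k * ‖θ‖ - α * D := by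
    field_simp
  rw [e3] at h
  simp only [← hI]
  linarith

/-- Proposition: equivalent regularized M-estimation for `p = 1`.
For a proper continuous convex loss with `L(u) ≤ C(1+|u|)` (hence Lipschitz, with minimal
Lipschitz constant `K = Lip(L) ≤ C`), the optimal value of the Wasserstein type-1
distributionally robust problem equals the optimal value of the regularized problem
`min_{θ∈Θ} (1/n)∑ L(y_i − θᵀx_i) + ε·Lip(L)·‖θ‖`. -/
theorem dro_eq_regularized_p1
    {d n : ℕ} (hn : 0 < n)
    (x : Fin n → EuclideanSpace ℝ (Fin d)) (y : Fin n → ℝ)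
    (Θ : Set (EuclideanSpace ℝ (Fin d))) (hΘ : Θ.Nonempty)
    (ε C : ℝ) (hε : 0 ≤ ε) (hC : 0 < C)
    (L : ℝ → ℝ) (hLconv : ConvexOn ℝ Set.univ L) (hLcont : Continuous L)
    (hLgrowth : ∀ u, L u ≤ C * (1 + |u|))
    (K : ℝ≥0) (hK : LipschitzWith K L)
    (hKmin : ∀ K' : ℝ≥0, LipschitzWith K' L → K ≤ K') :
    (K : ℝ) ≤ C ∧
    (⨅ (θ : Θ), droObjE 1 x y ε L θ) =
      ⨅ (θ : Θ),
        (((1 / (n : ℝ)) * ∑ i, L (y i - ⟪(θ : EuclideanSpace ℝ (Fin d)), x i⟫)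
            + ε * (K : ℝ) * ‖(θ : EuclideanSpace ℝ (Fin d))‖ : ℝ) : EReal) := by
  refine ⟨?_, ?_⟩
  · have := hKmin _ (lipschitz_of_growth hLconv hC hLgrowth)
    rw [← NNReal.coe_le_coe, Real.coe_toNNReal _ hC.le] at this
    exact this
  · congr 1
    funext θ
    rw [← empirical_integral x y fun z => L (z.2 - ⟪(θ : EuclideanSpace ℝ (Fin d)), z.1⟫)]
    apply le_antisymm
    · exact iSup_le fun Q => EReal.coe_le_coe_iff.mpr (integral_le_of_mem hn x y hε hK θ Q.2)
    · refine EReal.ge_of_forall_gt_iff_ge.mp fun a ha => ?_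
      obtain ⟨Q, hQ, hle⟩ := exists_near_optimal hn x y hε hLconv hK hKmin θ
        (EReal.coe_lt_coe_iff.mp ha)
      exact (EReal.coe_le_coe_iff.mpr hle).trans
        (le_iSup (fun Q : ambiguitySet 1 x y ε =>
          ((∫ z, L (z.2 - ⟪(θ : EuclideanSpace ℝ (Fin d)), z.1⟫)
            ∂(Q : Measure (EuclideanSpace ℝ (Fin d) × ℝ)) : ℝ) : EReal)) ⟨Q, hQ⟩)
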